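/- Let n ≥ 2, let Ω ⊂ ℝⁿ be an open bounded set contained in the closed ball of radius R centered at the origin, and let f₁, f₂ : ℝⁿ → ℝ be continuous, supported in the closure of Ω, with |f_j(x)| ≤ M for all x and j = 1,2. Define Rf(x,θ) := Σ_{m=2}^{∞} ((-1)^m/m!)(Xf(x,θ))^m. Then for every x ∈ ℝⁿ, | ∫_{S^{n-1}} ( Rf₁(x,θ) − Rf₂(x,θ) ) dθ | ≤ (e^{2RM} − 1) · ( X'X |f₁ − f₂| )(x). -/

import Mathlib

open MeasureTheory Metric Real

/-- The `n`-dimensional Euclidean space. -/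
abbrev Euc (n : ℕ) := EuclideanSpace ℝ (Fin n)

/-- The standard surface measure on the unit sphere `S^{n-1} ⊂ ℝⁿ`. -/
noncomputable def sphereMeasure (n : ℕ) : Measure (sphere (0 : Euc n) 1) :=
  (volume : Measure (Euc n)).toSphere

/-- The surface measure `|S^{n-1}|` of the unit sphere in `ℝⁿ`. -/
noncomputable def sphereVol (n : ℕ) : ℝ := (sphereMeasure n Set.univ).toReal

/-- The X-ray transform `Xf(x,θ) = ∫_ℝ f(x+sθ) ds`. -/
noncomputable def Xray {n : ℕ} (f : Euc n → ℝ) (x θ : Euc n) : ℝ :=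
  ∫ s : ℝ, f (x + s • θ)

/-- The normal operator `X'Xf(x) = ∫_{S^{n-1}} Xf(x,θ) dθ`. -/
noncomputable def normalOp {n : ℕ} (f : Euc n → ℝ) (x : Euc n) : ℝ :=
  ∫ θ : sphere (0 : Euc n) 1, Xray f x (θ : Euc n) ∂(sphereMeasure n)

/-- The single pixel X-ray transform `Kf(x) = ∫_{S^{n-1}} e^{-Xf(x,θ)} dθ`. -/
noncomputable def singlePixel {n : ℕ} (f : Euc n → ℝ) (x : Euc n) : ℝ :=
  ∫ θ : sphere (0 : Euc n) 1, Real.exp (-(Xray f x (θ : Euc n))) ∂(sphereMeasure n)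

/-- The Fourier transform `𝓕f(ξ) = ∫ e^{-i x·ξ} f(x) dx`. -/
noncomputable def FT {n : ℕ} (f : Euc n → ℝ) (ξ : Euc n) : ℂ :=
  ∫ x : Euc n, Complex.exp (-(Complex.I * ((inner ℝ x ξ : ℝ) : ℂ))) * (f x : ℂ)

/-- The inverse Fourier transform `𝓕⁻¹g(x) = (2π)^{-n} ∫ e^{i x·ξ} g(ξ) dξ`. -/
noncomputable def invFT {n : ℕ} (g : Euc n → ℂ) (x : Euc n) : ℂ :=
  ((((2 * π) ^ n)⁻¹ : ℝ) : ℂ) * ∫ ξ : Euc n, Complex.exp (Complex.I * ((inner ℝ x ξ : ℝ) : ℂ)) * g ξ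

/-- The `L²(ℝⁿ)` norm `(∫ |f|²)^{1/2}`. -/
noncomputable def L2norm {n : ℕ} (f : Euc n → ℝ) : ℝ :=
  (∫ x : Euc n, f x ^ 2) ^ ((1 : ℝ) / 2)

/-- The `H¹(U)` norm `(∫_U |u|²)^{1/2} + (∫_U |∇u|²)^{1/2}`. -/
noncomputable def H1norm {n : ℕ} (U : Set (Euc n)) (u : Euc n → ℝ) : ℝ :=
  (∫ x in U, u x ^ 2) ^ ((1 : ℝ) / 2) + (∫ x in U, ‖fderiv ℝ u x‖ ^ 2) ^ ((1 : ℝ) / 2)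

/-!
Summing the series, `Rf = e^{-Xf} - 1 + Xf`, so `Rf₁ - Rf₂` is an increment of `z ↦ e^z - z` between
`-Xf₂` and `-Xf₁`. A line meets a ball of radius `R` in a segment of length at most `2R`, so both
endpoints are at most `2RM` in absolute value, and on that range the derivative `e^z - 1` is bounded
by `e^{2RM} - 1`. Finally `|Xf₁ - Xf₂| ≤ X|f₁ - f₂|`, and one integrates over the sphere.
-/

theorem norm_cexp_sub_self_sub_le {r : ℝ} {z w : ℂ} (hz : ‖z‖ ≤ r) (hw : ‖w‖ ≤ r) :
    ‖(Complex.exp z - z) - (Complex.exp w - w)‖ ≤ (exp r - 1) * ‖z - w‖ := by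
  have hasDerivAt (u : ℂ) : HasDerivAt (fun u => Complex.exp u - u) (Complex.exp u - 1) u :=
    (Complex.hasDerivAt_exp u).sub (hasDerivAt_id u)
  have norm_deriv_le : ∀ u ∈ closedBall (0 : ℂ) r, ‖Complex.exp u - 1‖ ≤ exp r - 1 := by
    intro u hu
    calc ‖Complex.exp u - 1‖ ≤ exp ‖u‖ - 1 := by
          simpa using Complex.norm_exp_sub_sum_le_exp_norm_sub_sum u 1
      _ ≤ exp r - 1 := by gcongr; exact mem_closedBall_zero_iff.mp hu
  exact (convex_closedBall 0 r).norm_image_sub_le_of_norm_hasDerivWithin_le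
    (fun u _ => (hasDerivAt u).hasDerivWithinAt) norm_deriv_le
    (mem_closedBall_zero_iff.mpr hw) (mem_closedBall_zero_iff.mpr hz)

theorem abs_exp_sub_self_sub_le {r a b : ℝ} (ha : |a| ≤ r) (hb : |b| ≤ r) :
    |(exp a - a) - (exp b - b)| ≤ (exp r - 1) * |a - b| := by
  rw [← norm_eq_abs, ← Complex.norm_real] at ha hb
  exact_mod_cast norm_cexp_sub_self_sub_le ha hb

theorem hasSum_exp_neg_sub_one_add_self (t : ℝ) :
    HasSum (fun m : ℕ => (-1 : ℝ) ^ (m + 2) / (m + 2).factorial * t ^ (m + 2))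
      (exp (-t) - 1 + t) := by
  have hasSum_exp : HasSum (fun m : ℕ => (-t) ^ m / m.factorial) (exp (-t)) := by
    rw [exp_eq_exp_ℝ]
    exact NormedSpace.expSeries_div_hasSum_exp (-t)
  have term_eq (m : ℕ) : (-1 : ℝ) ^ (m + 2) / (m + 2).factorial * t ^ (m + 2) =
      (-t) ^ (m + 2) / (m + 2).factorial := by
    rw [neg_pow t]
    ring
  have head_eq : ∑ m ∈ Finset.range 2, (-t) ^ m / (m.factorial : ℝ) = 1 - t := by
    simp [Finset.sum_range_succ, sub_eq_add_neg]
  rw [funext term_eq, sub_add, ← head_eq]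
  exact (hasSum_nat_add_iff' 2).mpr hasSum_exp

section Line

variable {E F : Type*} [NormedAddCommGroup E] [InnerProductSpace ℝ E] [NormedAddCommGroup F]
  {f : E → F} {c x θ : E} {R M : ℝ}

theorem mem_closedBall_inner_of_add_smul_mem_closedBall {s : ℝ} (hθ : ‖θ‖ = 1)
    (h : x + s • θ ∈ closedBall c R) : s ∈ closedBall (inner ℝ (c - x) θ) R := by
  have inner_eq : inner ℝ (x + s • θ - c) θ = s - inner ℝ (c - x) θ := by
    simp only [inner_sub_left, inner_add_left, real_inner_smul_left, real_inner_self_eq_norm_sq, hθ]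
    ring
  rw [mem_closedBall, dist_eq_norm] at h ⊢
  calc |s - inner ℝ (c - x) θ| ≤ ‖x + s • θ - c‖ * ‖θ‖ := inner_eq ▸ abs_real_inner_le_norm _ _
    _ ≤ R := by rwa [hθ, mul_one]

theorem support_comp_line_subset (hs : Function.support f ⊆ closedBall c R) (hθ : ‖θ‖ = 1) :
    (Function.support fun s : ℝ => f (x + s • θ)) ⊆ closedBall (inner ℝ (c - x) θ) R :=
  fun _ h => mem_closedBall_inner_of_add_smul_mem_closedBall hθ (hs h)

theorem integrable_comp_line [MeasurableSpace E] [BorelSpace E] (hf : StronglyMeasurable f)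
    (hs : Function.support f ⊆ closedBall c R) (hM : ∀ y, ‖f y‖ ≤ M) (hθ : ‖θ‖ = 1) :
    Integrable fun s : ℝ => f (x + s • θ) := by
  have line_measurable : Measurable fun s : ℝ => x + s • θ :=
    Continuous.measurable (by fun_prop)
  rw [← integrableOn_iff_integrable_of_support_subset (support_comp_line_subset hs hθ)]
  exact Measure.integrableOn_of_bounded measure_closedBall_lt_top.ne
    (hf.comp_measurable line_measurable).aestronglyMeasurable (ae_of_all _ fun _ => hM _)

end Line

section Xray

variable {n : ℕ} {f g : Euc n → ℝ} {c x θ : Euc n} {R M : ℝ}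

theorem abs_xray_le (hR : 0 ≤ R) (hs : Function.support f ⊆ closedBall c R)
    (hM : ∀ y, |f y| ≤ M) (hθ : ‖θ‖ = 1) : |Xray f x θ| ≤ 2 * R * M := by
  set I := closedBall (inner ℝ (c - x) θ) R
  calc |Xray f x θ| = ‖∫ s in I, f (x + s • θ)‖ := by
        rw [setIntegral_eq_integral_of_forall_compl_eq_zero
          (Function.support_subset_iff'.mp (support_comp_line_subset hs hθ)), Xray, norm_eq_abs]
    _ ≤ M * volume.real I :=
        norm_setIntegral_le_of_norm_le_const measure_closedBall_lt_top fun _ _ => hM _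
    _ = 2 * R * M := by rw [volume_real_closedBall hR, mul_comm]

theorem abs_xray_sub_le (hf : Integrable fun s : ℝ => f (x + s • θ))
    (hg : Integrable fun s : ℝ => g (x + s • θ)) :
    |Xray f x θ - Xray g x θ| ≤ Xray (fun y => |f y - g y|) x θ := by
  rw [Xray, Xray, ← integral_sub hf hg]
  exact abs_integral_le_integral_abs

theorem measurable_xray (hf : Measurable f) :
    Measurable fun p : Euc n × Euc n => Xray f p.1 p.2 :=
  (StronglyMeasurable.integral_prod_right'
    (f := fun q : (Euc n × Euc n) × ℝ => f (q.1.1 + q.2 • q.1.2))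
    (by fun_prop : Measurable _).stronglyMeasurable).measurable

theorem integrable_xray_sphere (μ : Measure (sphere (0 : Euc n) 1)) [IsFiniteMeasure μ]
    (hR : 0 ≤ R) (hf : Measurable f) (hs : Function.support f ⊆ closedBall c R)
    (hM : ∀ y, |f y| ≤ M) (x : Euc n) :
    Integrable (fun θ : sphere (0 : Euc n) 1 => Xray f x θ) μ := by
  have measurable_direction : Measurable fun θ : sphere (0 : Euc n) 1 => Xray f x θ :=
    (measurable_xray hf).comp (measurable_prodMk_left.comp measurable_subtype_coe)
  exact .of_bound measurable_direction.aestronglyMeasurable (2 * R * M)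
    (ae_of_all _ fun θ => abs_xray_le hR hs hM (norm_eq_of_mem_sphere θ))

end Xray

instance (n : ℕ) : IsFiniteMeasure (sphereMeasure n) :=
  inferInstanceAs (IsFiniteMeasure (volume : Measure (Euc n)).toSphere)

/-- The nonlinear remainder `Rf(x,θ) = Σ_{m≥2} ((-1)^m/m!) (Xf(x,θ))^m` in the Taylor expansion of
`e^{-Xf(x,θ)}`; the summation index is shifted by `2`. -/
noncomputable def xrayRemainder {n : ℕ} (f : Euc n → ℝ) (x θ : Euc n) : ℝ :=
  ∑' m : ℕ, (-1 : ℝ) ^ (m + 2) / (m + 2).factorial * Xray f x θ ^ (m + 2)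

section Remainder

variable {n : ℕ} {f f₁ f₂ : Euc n → ℝ} {c x θ : Euc n} {R M : ℝ}

theorem xrayRemainder_eq_exp : xrayRemainder f x θ = exp (-Xray f x θ) - 1 + Xray f x θ :=
  (hasSum_exp_neg_sub_one_add_self _).tsum_eq

theorem abs_xrayRemainder_sub_le_abs_xray_sub {r : ℝ} (h₁ : |Xray f₁ x θ| ≤ r)
    (h₂ : |Xray f₂ x θ| ≤ r) :
    |xrayRemainder f₁ x θ - xrayRemainder f₂ x θ| ≤
      (exp r - 1) * |Xray f₁ x θ - Xray f₂ x θ| := by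
  rw [← abs_neg (Xray f₁ x θ)] at h₁
  rw [← abs_neg (Xray f₂ x θ)] at h₂
  convert abs_exp_sub_self_sub_le h₁ h₂ using 2
  · rw [xrayRemainder_eq_exp, xrayRemainder_eq_exp]
    ring
  · rw [neg_sub_neg, abs_sub_comm]

theorem abs_xrayRemainder_sub_le (hR : 0 ≤ R) (hf₁ : Measurable f₁) (hf₂ : Measurable f₂)
    (hs₁ : Function.support f₁ ⊆ closedBall c R) (hs₂ : Function.support f₂ ⊆ closedBall c R)
    (hM₁ : ∀ y, |f₁ y| ≤ M) (hM₂ : ∀ y, |f₂ y| ≤ M) (hθ : ‖θ‖ = 1) :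
    |xrayRemainder f₁ x θ - xrayRemainder f₂ x θ| ≤
      (exp (2 * R * M) - 1) * Xray (fun y => |f₁ y - f₂ y|) x θ := by
  have h₁ : |Xray f₁ x θ| ≤ 2 * R * M := abs_xray_le hR hs₁ hM₁ hθ
  have h₂ : |Xray f₂ x θ| ≤ 2 * R * M := abs_xray_le hR hs₂ hM₂ hθ
  have constant_nonneg : 0 ≤ exp (2 * R * M) - 1 :=
    sub_nonneg.mpr (one_le_exp ((abs_nonneg _).trans h₁))
  have integrable₁ := integrable_comp_line (x := x) hf₁.stronglyMeasurable hs₁ hM₁ hθ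
  have integrable₂ := integrable_comp_line (x := x) hf₂.stronglyMeasurable hs₂ hM₂ hθ
  calc |xrayRemainder f₁ x θ - xrayRemainder f₂ x θ|
    _ ≤ (exp (2 * R * M) - 1) * |Xray f₁ x θ - Xray f₂ x θ| :=
        abs_xrayRemainder_sub_le_abs_xray_sub h₁ h₂
    _ ≤ (exp (2 * R * M) - 1) * Xray (fun y => |f₁ y - f₂ y|) x θ :=
        mul_le_mul_of_nonneg_left (abs_xray_sub_le integrable₁ integrable₂) constant_nonneg

theorem remainder_difference_estimate_general (hR : 0 ≤ R)
    (hf₁ : Measurable f₁) (hf₂ : Measurable f₂)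
    (hs₁ : Function.support f₁ ⊆ closedBall c R) (hs₂ : Function.support f₂ ⊆ closedBall c R)
    (hM₁ : ∀ y, |f₁ y| ≤ M) (hM₂ : ∀ y, |f₂ y| ≤ M) (x : Euc n) :
    |∫ θ : sphere (0 : Euc n) 1, (xrayRemainder f₁ x θ - xrayRemainder f₂ x θ)
        ∂(sphereMeasure n)| ≤
      (exp (2 * R * M) - 1) * normalOp (fun y => |f₁ y - f₂ y|) x := by
  have support_subset : (Function.support fun y => |f₁ y - f₂ y|) ⊆ closedBall c R :=
    (Function.support_comp_subset abs_zero (f₁ - f₂)).trans <|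
      (Function.support_sub f₁ f₂).trans (Set.union_subset hs₁ hs₂)
  have abs_abs_sub_le (y : Euc n) : |(|f₁ y - f₂ y|)| ≤ M + M := by
    rw [abs_abs]
    exact (abs_sub _ _).trans (add_le_add (hM₁ y) (hM₂ y))
  have integrable_xray_abs_sub := integrable_xray_sphere (sphereMeasure n) hR
    (by fun_prop : Measurable fun y => |f₁ y - f₂ y|) support_subset abs_abs_sub_le x
  rw [normalOp, ← integral_const_mul, ← norm_eq_abs]
  exact norm_integral_le_of_norm_le (integrable_xray_abs_sub.const_mul _) <| ae_of_all _ fun θ =>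
    abs_xrayRemainder_sub_le hR hf₁ hf₂ hs₁ hs₂ hM₁ hM₂ (norm_eq_of_mem_sphere θ)

end Remainder

/-- For `n ≥ 2`, `Ω` open bounded contained in the closed ball of radius `R`, and
`f₁, f₂` continuous, supported in `closure Ω`, bounded by `M`, the integrated Taylor remainders
`Rf(x,θ) = Σ_{m=2}^∞ ((-1)^m/m!)(Xf(x,θ))^m` satisfy
`|∫_{S^{n-1}} (Rf₁ − Rf₂) dθ| ≤ (e^{2RM} − 1)(X'X|f₁ − f₂|)(x)`. -/
theorem remainder_difference_estimate (n : ℕ) (hn : 2 ≤ n) (R M : ℝ) (hR : 0 ≤ R)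
    (Ω : Set (Euc n)) (hΩo : IsOpen Ω) (hΩb : Bornology.IsBounded Ω)
    (hΩR : Ω ⊆ Metric.closedBall 0 R)
    (f₁ f₂ : Euc n → ℝ) (hf₁ : Continuous f₁) (hf₂ : Continuous f₂)
    (hs₁ : Function.support f₁ ⊆ closure Ω) (hs₂ : Function.support f₂ ⊆ closure Ω)
    (hM₁ : ∀ x, |f₁ x| ≤ M) (hM₂ : ∀ x, |f₂ x| ≤ M) (x : Euc n) :
    |∫ θ : sphere (0 : Euc n) 1,
        ((∑' m : ℕ, (-1 : ℝ) ^ (m + 2) / (m + 2).factorial * Xray f₁ x (θ : Euc n) ^ (m + 2)) -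
         (∑' m : ℕ, (-1 : ℝ) ^ (m + 2) / (m + 2).factorial * Xray f₂ x (θ : Euc n) ^ (m + 2)))
        ∂(sphereMeasure n)| ≤
      (Real.exp (2 * R * M) - 1) * normalOp (fun y => |f₁ y - f₂ y|) x := by
  have closure_subset : closure Ω ⊆ closedBall 0 R := closure_minimal hΩR isClosed_closedBall
  exact remainder_difference_estimate_general hR hf₁.measurable hf₂.measurable
    (hs₁.trans closure_subset) (hs₂.trans closure_subset) hM₁ hM₂ x
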